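/- Let h₁, h₂, h₃ be parabolic elements of PSL(2,ℂ) with pairwise distinct fixed points such that h₁h₂h₃ = 1, and suppose the subgroup F = ⟨h₁, h₂, h₃⟩ is discrete. Then F is Fuchsian, i.e. conjugate in PSL(2,ℂ) to a subgroup of PSL(2,ℝ), and its limit set Λ(F) is a round circle in the Riemann sphere. -/

import Mathlib

/- # Background definitions for Kleinian groups
We model the Riemann sphere as `OnePoint ℂ`, `PSL(2,ℂ)` as the quotient of
`SL(2,ℂ)` by its center, acting by Möbius transformations on the sphere and by
Poincaré extension on upper half-space (the model `W = OnePoint (ℂ × ℝ)` of the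
closed ball, whose open upper part is hyperbolic 3-space `ℍ³`). -/

noncomputable section

abbrev SL2C := Matrix.SpecialLinearGroup (Fin 2) ℂ

instance : TopologicalSpace SL2C :=
  TopologicalSpace.induced (fun A : SL2C => (A.1 : Matrix (Fin 2) (Fin 2) ℂ)) inferInstance
abbrev PSL2C := SL2C ⧸ Subgroup.center SL2C
abbrev RSphere := OnePoint ℂ

/-- The Möbius transformation of the Riemann sphere attached to a matrix in `SL(2,ℂ)`. -/
def mobiusSL (A : SL2C) (z : RSphere) : RSphere :=
  Option.elim z
    (if A.1 1 0 = 0 then OnePoint.infty else (((A.1 0 0) / (A.1 1 0) : ℂ) : RSphere))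
    (fun w => if A.1 1 0 * w + A.1 1 1 = 0 then OnePoint.infty
      else (((A.1 0 0 * w + A.1 0 1) / (A.1 1 0 * w + A.1 1 1) : ℂ) : RSphere))

/-- The action of `PSL(2,ℂ)` on the Riemann sphere (via a representative matrix;
the Möbius transformation does not depend on the choice of sign). -/
def psl (g : PSL2C) : RSphere → RSphere := mobiusSL (Quotient.out g)

/-- Region of discontinuity of a subgroup of `PSL(2,ℂ)`. -/
def omegaSet (G : Subgroup PSL2C) : Set RSphere :=
  {z | ∃ U : Set RSphere, IsOpen U ∧ z ∈ U ∧
    {g : PSL2C | g ∈ G ∧ (psl g '' U ∩ U).Nonempty}.Finite}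

/-- The limit set `Λ(G)`. -/
def limitSet (G : Subgroup PSL2C) : Set RSphere := (omegaSet G)ᶜ

/-- Parabolic element: not the identity, with exactly one fixed point on the sphere. -/
def IsParabolic (g : PSL2C) : Prop := g ≠ 1 ∧ ∃! z : RSphere, psl g z = z

/-- A rotation: fixes `0` and `∞` and acts as multiplication by a unimodular number. -/
def IsRotation (g : PSL2C) : Prop :=
  ∃ u : ℂ, ‖u‖ = 1 ∧ ∀ z : ℂ, psl g (z : RSphere) = ((u * z : ℂ) : RSphere)

/-- Loxodromic element: exactly two fixed points, and not conjugate to a rotation. -/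
def IsLoxodromic (g : PSL2C) : Prop :=
  (∃ z w : RSphere, z ≠ w ∧ ∀ x, psl g x = x ↔ x = z ∨ x = w) ∧
  ¬ ∃ h : PSL2C, IsRotation (h * g * h⁻¹)

def TorsionFree (G : Subgroup PSL2C) : Prop :=
  ∀ g ∈ G, ∀ n : ℕ, 0 < n → g ^ n = 1 → g = 1

/-- Non-elementary: at least three limit points. -/
def NonElementary (G : Subgroup PSL2C) : Prop :=
  ∃ a b c : RSphere, a ∈ limitSet G ∧ b ∈ limitSet G ∧ c ∈ limitSet G ∧
    a ≠ b ∧ a ≠ c ∧ b ≠ c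

/-- Our standing hypotheses: a discrete, finitely generated, torsion-free,
non-elementary subgroup of `PSL(2,ℂ)` with nonempty region of discontinuity. -/
def IsKleinian (G : Subgroup PSL2C) : Prop :=
  DiscreteTopology ↥G ∧ G.FG ∧ TorsionFree G ∧ NonElementary G ∧ (omegaSet G).Nonempty

/- ## Hyperbolic 3-space and the closed-ball model `W` -/

/-- The closed ball model: one-point compactification of the closed half space
`{(z,t) : t ≥ 0}` (points with `t < 0` are irrelevant junk). -/
abbrev W := OnePoint (ℂ × ℝ)

/-- Poincaré extension of the Möbius transformation of `A ∈ SL(2,ℂ)` to upper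
half-space, in coordinates `(z,t)`, `t > 0`. -/
def poincare (A : SL2C) (z : ℂ) (t : ℝ) : ℂ × ℝ :=
  let a := A.1 0 0; let b := A.1 0 1; let c := A.1 1 0; let d := A.1 1 1
  let D : ℝ := Complex.normSq (c * z + d) + Complex.normSq c * t ^ 2
  (((a * z + b) * (starRingEnd ℂ) (c * z + d) + a * (starRingEnd ℂ) c * (t : ℂ) ^ 2) / (D : ℂ),
    t / D)

/-- The action of a matrix on the closed ball model `W`: Poincaré extension on the
open upper half space, Möbius action on the boundary sphere `{t = 0} ∪ {∞}`. -/
def actWSL (A : SL2C) (x : W) : W :=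
  Option.elim x
    (if A.1 1 0 = 0 then OnePoint.infty
      else (((A.1 0 0 / A.1 1 0 : ℂ), (0 : ℝ)) : ℂ × ℝ))
    (fun p => if 0 < p.2 then ((poincare A p.1 p.2 : ℂ × ℝ) : W)
      else if A.1 1 0 * p.1 + A.1 1 1 = 0 then OnePoint.infty
      else ((((A.1 0 0 * p.1 + A.1 0 1) / (A.1 1 0 * p.1 + A.1 1 1) : ℂ), (0 : ℝ)) : ℂ × ℝ))

def actW (g : PSL2C) : W → W := actWSL (Quotient.out g)

/-- The boundary sphere embedded in the closed ball model. -/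
def embS : RSphere → W :=
  fun z => Option.elim z OnePoint.infty (fun w => (((w, (0 : ℝ)) : ℂ × ℝ) : W))

/-- Hyperbolic 3-space, as the open upper part of `W`. -/
def upperW : Set W := {x | ∃ p : ℂ × ℝ, x = (p : W) ∧ 0 < p.2}

/-- The domain `ℍ³ ∪ Ω(G)` inside the closed ball. -/
def domSet (G : Subgroup PSL2C) : Set W := upperW ∪ embS '' omegaSet G

/-- The quotient manifold `M(G) = (ℍ³ ∪ Ω(G))/G`. -/
def mrel (G : Subgroup PSL2C) : Setoid ↥(domSet G) :=
  Relation.EqvGen.setoid fun x y : ↥(domSet G) => ∃ g ∈ G, actW g ↑x = ↑y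

def MSpace (G : Subgroup PSL2C) : Type := Quotient (mrel G)

instance (G : Subgroup PSL2C) : TopologicalSpace (MSpace G) :=
  inferInstanceAs (TopologicalSpace (Quotient (mrel G)))

/-- Projection to the quotient manifold. -/
def mproj (G : Subgroup PSL2C) : ↥(domSet G) → MSpace G := Quotient.mk (mrel G)

/- ## Cores, curves on surfaces, and the boundary characteristic -/

/-- A core of `M(G)`: a compact connected subset whose inclusion induces an
isomorphism of fundamental groups (injectivity and surjectivity on loops up to
homotopy rel endpoints). -/
def IsCore (G : Subgroup PSL2C) (K : Set (MSpace G)) : Prop :=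
  IsCompact K ∧ IsConnected K ∧
  ∃ x₀ : ↥K,
    (∀ γ : Path ((x₀ : MSpace G)) (x₀ : MSpace G),
       ∃ δ : Path x₀ x₀, (δ.map continuous_subtype_val).Homotopic γ) ∧
    (∀ δ₁ δ₂ : Path x₀ x₀,
       (δ₁.map continuous_subtype_val).Homotopic (δ₂.map continuous_subtype_val) →
         δ₁.Homotopic δ₂)

abbrev S1 := AddCircle (1 : ℝ)

def circleReverse : C(S1, S1) := ⟨fun x => -x, continuous_neg⟩

/-- A space supports `n` disjoint homotopically distinct (essential) simple closed
curves. Homotopic distinctness is free homotopy, allowing reversal of orientation. -/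
def SuppCurves (X : Type*) [TopologicalSpace X] (n : ℕ) : Prop :=
  ∃ f : Fin n → C(S1, X),
    (∀ i, Function.Injective (f i)) ∧
    (∀ i j, i ≠ j → Disjoint (Set.range (f i)) (Set.range (f j))) ∧
    (∀ i (x : X), ¬ (f i).Homotopic (ContinuousMap.const S1 x)) ∧
    (∀ i j, i ≠ j → ¬ (f i).Homotopic (f j) ∧ ¬ (f i).Homotopic ((f j).comp circleReverse))

/-- The maximal number of disjoint homotopically distinct simple closed curves
supported on the boundary of the given core. -/
def coreCurveSup (G : Subgroup PSL2C) (K : Set (MSpace G)) : ℕ :=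
  sSup {n : ℕ | SuppCurves ↥(frontier K) n}

/-- The maximal number of disjoint homotopically distinct simple closed curves on
the boundary of any core of `M(G)`. -/
def curveMax (G : Subgroup PSL2C) : ℕ :=
  sSup {n : ℕ | ∃ K, IsCore G K ∧ SuppCurves ↥(frontier K) n}

def FixesAll (H : Subgroup PSL2C) (p : RSphere) : Prop := ∀ h ∈ H, psl h p = p

/-- A parabolic subgroup of `G`: a nontrivial subgroup of `G` with a common fixed
point, all of whose nontrivial elements are parabolic. -/
def IsParabolicSubgroup (G H : Subgroup PSL2C) : Prop :=
  H ≤ G ∧ H ≠ ⊥ ∧ (∃ p, FixesAll H p) ∧ ∀ h ∈ H, h = 1 ∨ IsParabolic h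

def IsMaxParabolic (G H : Subgroup PSL2C) : Prop :=
  IsParabolicSubgroup G H ∧ ∀ H', IsParabolicSubgroup G H' → H ≤ H' → H' = H

/-- Rank 1: isomorphic to `ℤ`. -/
def HasRank1 (H : Subgroup PSL2C) : Prop := Nonempty (↥H ≃* Multiplicative ℤ)

/-- Rank 2: isomorphic to `ℤ × ℤ`. -/
def HasRank2 (H : Subgroup PSL2C) : Prop := Nonempty (↥H ≃* Multiplicative (ℤ × ℤ))

/-- The number of `G`-conjugacy classes of subgroups satisfying `P`. -/
def numClasses (G : Subgroup PSL2C) (P : Subgroup PSL2C → Prop) : ℕ :=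
  Nat.card (Quotient (Relation.EqvGen.setoid fun H₁ H₂ : {H : Subgroup PSL2C // P H} =>
    ∃ g ∈ G, Subgroup.map (MulAut.conj g).toMonoidHom H₁.1 = H₂.1))

def numRank2Classes (G : Subgroup PSL2C) : ℕ :=
  numClasses G fun H => IsMaxParabolic G H ∧ HasRank2 H

def numRank1Classes (G : Subgroup PSL2C) : ℕ :=
  numClasses G fun H => IsMaxParabolic G H ∧ HasRank1 H

/-- The boundary characteristic `b(G) = n - τ`. -/
def bChar (G : Subgroup PSL2C) : ℤ := (curveMax G : ℤ) - (numRank2Classes G : ℤ)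

/-- Maximally parabolic: `G` has `b(G)` conjugacy classes of rank 1 maximal
parabolic subgroups. -/
def MaximallyParabolic (G : Subgroup PSL2C) : Prop :=
  (numRank1Classes G : ℤ) = bChar G

/- ## Geometric finiteness -/

/-- `cosh` of the hyperbolic distance between two points of upper half space. -/
def hcosh (p q : ℂ × ℝ) : ℝ :=
  1 + (Complex.normSq (p.1 - q.1) + (p.2 - q.2) ^ 2) / (2 * p.2 * q.2)

/-- Hyperbolic half-space, as the points at least as close to `a` as to `b`. -/
def hHalfSpace (a b : ℂ × ℝ) : Set (ℂ × ℝ) := {p | hcosh p a ≤ hcosh p b}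

/-- Action of `PSL(2,ℂ)` on the upper half-space coordinates. -/
def actH (g : PSL2C) (p : ℂ × ℝ) : ℂ × ℝ := poincare (Quotient.out g) p.1 p.2

def upperH : Set (ℂ × ℝ) := {p | 0 < p.2}

/-- Geometric finiteness: `G` has a finite-sided convex fundamental polyhedron in
`ℍ³` (a finite intersection of hyperbolic half-spaces whose `G`-translates cover
`ℍ³` and whose interiors are pairwise disjoint translates). -/
def GeomFinite (G : Subgroup PSL2C) : Prop :=
  ∃ s : Finset ((ℂ × ℝ) × (ℂ × ℝ)),
    (∀ q ∈ s, q.1 ∈ upperH ∧ q.2 ∈ upperH ∧ q.1 ≠ q.2) ∧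
    ∃ P : Set (ℂ × ℝ), P = upperH ∩ ⋂ q ∈ s, hHalfSpace q.1 q.2 ∧
      (∀ x ∈ upperH, ∃ g ∈ G, actH g x ∈ P) ∧
      (∀ g ∈ G, g ≠ 1 → Disjoint (actH g '' interior P) (interior P))

/- ## Round discs, precise invariance, cusps -/

def unitDiscS : Set RSphere := {z | ∃ w : ℂ, z = (w : RSphere) ∧ ‖w‖ < 1}
def unitCircleS : Set RSphere := {z | ∃ w : ℂ, z = (w : RSphere) ∧ ‖w‖ = 1}

/-- A round disc: a Möbius image of the open unit disc. -/
def IsRoundDisc (D : Set RSphere) : Prop := ∃ g : PSL2C, D = psl g '' unitDiscS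

/-- A round circle: a Möbius image of the unit circle. -/
def IsRoundCircle (S : Set RSphere) : Prop := ∃ g : PSL2C, S = psl g '' unitCircleS

/-- `E` is precisely invariant under `H` in `G`. -/
def PreciselyInvariant (G H : Subgroup PSL2C) (E : Set RSphere) : Prop :=
  (∀ h ∈ H, psl h '' E = E) ∧ ∀ g ∈ G, g ∉ H → Disjoint (psl g '' E) E

def PreciselyInvariantW (G H : Subgroup PSL2C) (E : Set W) : Prop :=
  (∀ h ∈ H, actW h '' E = E) ∧ ∀ g ∈ G, g ∉ H → Disjoint (actW g '' E) E

/-- `p` is doubly cusped with cusp discs `D₁, D₂`: two disjoint round discs in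
`Ω(G)`, mutually tangent at `p`, whose union is precisely invariant under `H`. -/
def DoublyCuspedWith (G H : Subgroup PSL2C) (p : RSphere) (D₁ D₂ : Set RSphere) : Prop :=
  IsRoundDisc D₁ ∧ IsRoundDisc D₂ ∧ D₁ ⊆ omegaSet G ∧ D₂ ⊆ omegaSet G ∧
  Disjoint D₁ D₂ ∧ closure D₁ ∩ closure D₂ = {p} ∧ PreciselyInvariant G H (D₁ ∪ D₂)

def DoublyCusped (G H : Subgroup PSL2C) (p : RSphere) : Prop :=
  ∃ D₁ D₂, DoublyCuspedWith G H p D₁ D₂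

/- ## The quotient surface `Ω(G)/G` -/

def orel (G : Subgroup PSL2C) : Setoid ↥(omegaSet G) :=
  Relation.EqvGen.setoid fun z w : ↥(omegaSet G) => ∃ g ∈ G, psl g ↑z = ↑w

def QuotOmega (G : Subgroup PSL2C) : Type := Quotient (orel G)

instance (G : Subgroup PSL2C) : TopologicalSpace (QuotOmega G) :=
  inferInstanceAs (TopologicalSpace (Quotient (orel G)))

def oproj (G : Subgroup PSL2C) : ↥(omegaSet G) → QuotOmega G := Quotient.mk (orel G)

/-- A triply punctured sphere: homeomorphic to the Riemann sphere minus 3 points. -/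
def IsTriplyPuncturedSphere (X : Type*) [TopologicalSpace X] : Prop :=
  ∃ p₁ p₂ p₃ : RSphere, p₁ ≠ p₂ ∧ p₁ ≠ p₃ ∧ p₂ ≠ p₃ ∧
    Nonempty (X ≃ₜ ↥({p₁, p₂, p₃}ᶜ : Set RSphere))

def IsTorus (X : Type*) [TopologicalSpace X] : Prop := Nonempty (X ≃ₜ (S1 × S1))

/-- The union of the non-toral connected components of a subset `X`. -/
def nonToralPart {Y : Type*} [TopologicalSpace Y] (X : Set Y) : Set Y :=
  {y | y ∈ X ∧ ¬ IsTorus ↥(connectedComponentIn X y)}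

/-- A closed curve in `Ω(G)/G` is represented by `g ∈ G` if it lifts to a path in
`Ω(G)` whose endpoints are translates by `g`. -/
def RepresentedByOmega (G : Subgroup PSL2C) (f : C(S1, QuotOmega G)) (g : PSL2C) : Prop :=
  g ∈ G ∧ ∃ γ : C(ℝ, ↥(omegaSet G)),
    (∀ t : ℝ, (↑(γ (t + 1)) : RSphere) = psl g ↑(γ t)) ∧
    (∀ t : ℝ, oproj G (γ t) = f (↑t : S1))

/-- A closed curve in `M(G)` is represented by `g ∈ G` if it lifts to a path in
`ℍ³ ∪ Ω(G)` whose endpoints are translates by `g`. -/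
def RepresentedByM (G : Subgroup PSL2C) (f : C(S1, MSpace G)) (g : PSL2C) : Prop :=
  g ∈ G ∧ ∃ γ : C(ℝ, ↥(domSet G)),
    (∀ t : ℝ, (↑(γ (t + 1)) : W) = actW g ↑(γ t)) ∧
    (∀ t : ℝ, mproj G (γ t) = f (↑t : S1))

/- ## Components, function groups, pinched function groups -/

def IsComponentOf (G : Subgroup PSL2C) (C : Set RSphere) : Prop :=
  ∃ z ∈ omegaSet G, C = connectedComponentIn (omegaSet G) z

def GInvariant (G : Subgroup PSL2C) (A : Set RSphere) : Prop := ∀ g ∈ G, psl g '' A = A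

def FunctionGroup (G : Subgroup PSL2C) : Prop :=
  ∃ C, IsComponentOf G C ∧ GInvariant G C

/-- Two components are adjacent if a doubly cusped rank 1 maximal parabolic
subgroup has its pair of tangent discs lying one in each. -/
def AdjacentComp (G : Subgroup PSL2C) (C₁ C₂ : Set RSphere) : Prop :=
  ∃ H p D₁ D₂, IsMaxParabolic G H ∧ HasRank1 H ∧ FixesAll H p ∧
    DoublyCuspedWith G H p D₁ D₂ ∧ D₁ ⊆ C₁ ∧ D₂ ⊆ C₂

/-- An augmented component: the union of an equivalence class of components under
the equivalence relation generated by adjacency. -/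
def IsAugmentedComponent (G : Subgroup PSL2C) (A : Set RSphere) : Prop :=
  ∃ C₀, IsComponentOf G C₀ ∧
    A = ⋃₀ {C : Set RSphere | IsComponentOf G C ∧
      Relation.EqvGen (fun X Y => IsComponentOf G X ∧ IsComponentOf G Y ∧ AdjacentComp G X Y) C₀ C}

/-- A pinched function group: a Kleinian group with an invariant augmented component. -/
def PinchedFunctionGroup (G : Subgroup PSL2C) : Prop :=
  ∃ A, IsAugmentedComponent G A ∧ GInvariant G A

/- ## Fuchsian subgroups and the peripheral families ℱ(G), ℱ₀(G) -/

def IsRealElt (g : PSL2C) : Prop :=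
  ∃ A : SL2C, (∀ i j, (A.1 i j).im = 0) ∧ (QuotientGroup.mk A : PSL2C) = g

/-- Fuchsian: conjugate in `PSL(2,ℂ)` to a subgroup of `PSL(2,ℝ)`. -/
def IsFuchsian (F : Subgroup PSL2C) : Prop :=
  ∃ h : PSL2C, ∀ f ∈ F, IsRealElt (h * f * h⁻¹)

/-- `ℱ(G)`: Fuchsian subgroups of `G` generated by three parabolics with product
the identity. -/
def InFF (G F : Subgroup PSL2C) : Prop :=
  F ≤ G ∧ IsFuchsian F ∧ ∃ h₁ h₂ h₃ : PSL2C, IsParabolic h₁ ∧ IsParabolic h₂ ∧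
    IsParabolic h₃ ∧ h₁ * h₂ * h₃ = 1 ∧ F = Subgroup.closure {h₁, h₂, h₃}

/-- `ℱ₀(G)`: the peripheral members of `ℱ(G)`, i.e. those which are component
subgroups (stabilizers in `G` of a component of `Ω(G)`). -/
def InFF0 (G F : Subgroup PSL2C) : Prop :=
  InFF G F ∧ ∃ C, IsComponentOf G C ∧ ∀ x : PSL2C, x ∈ F ↔ x ∈ G ∧ psl x '' C = C

/-- Image of a subgroup `F ≤ G` under an isomorphism `φ : G ≃ G'`, as a subgroup
of `PSL(2,ℂ)`. -/
def pushSub {G G' : Subgroup PSL2C} (φ : ↥G ≃* ↥G') (F : Subgroup PSL2C) :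
    Subgroup PSL2C :=
  Subgroup.map (G'.subtype.comp φ.toMonoidHom) (F.subgroupOf G)

/- ## Horoballs and the natural truncation -/

def upperBallW (s : ℝ) : Set W := {x | ∃ p : ℂ × ℝ, x = (p : W) ∧ s < p.2}

/-- A horoball in `ℍ³` tangent to the sphere at `p`. -/
def IsHoroballAt (B : Set W) (p : RSphere) : Prop :=
  ∃ g : PSL2C, ∃ s : ℝ, 0 < s ∧ psl g OnePoint.infty = p ∧ B = actW g '' upperBallW s

/-- The hyperbolic half-space of `ℍ³` lying above a round disc `D`. -/
def IsHalfSpaceAbove (S : Set W) (D : Set RSphere) : Prop :=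
  ∃ g : PSL2C, D = psl g '' unitDiscS ∧
    S = actW g '' {x | ∃ p : ℂ × ℝ, x = (p : W) ∧ 0 < p.2 ∧ Complex.normSq p.1 + p.2 ^ 2 < 1}

/-- The piece removed from `M(G)` at (the fixed point of) a maximal parabolic
subgroup `H`: a precisely invariant horoball (cusp torus) if `H` has rank 2; a
horoball together with the two half-spaces over the tangent discs and the
punctured discs themselves (pairing tube) if `H` has rank 1 and its fixed point
is doubly cusped; nothing otherwise. -/
def IsCuspPiece (G H : Subgroup PSL2C) (E : Set W) : Prop :=
  ∃ p, FixesAll H p ∧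
    ((HasRank2 H ∧ ∃ B, IsHoroballAt B p ∧ E = B) ∨
     (HasRank1 H ∧ DoublyCusped G H p ∧
        ∃ B D₁ D₂ S₁ S₂, IsHoroballAt B p ∧ DoublyCuspedWith G H p D₁ D₂ ∧
          IsHalfSpaceAbove S₁ D₁ ∧ IsHalfSpaceAbove S₂ D₂ ∧
          E = B ∪ S₁ ∪ S₂ ∪ embS '' ((D₁ ∪ D₂) \ {p})) ∨
     (HasRank1 H ∧ ¬ DoublyCusped G H p ∧ E = ∅))

/-- `R ⊆ ℍ³ ∪ Ω(G)` is (the preimage of) the removed part defining the natural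
truncation `T(G)`: a `G`-invariant union of precisely invariant, pairwise
disjoint cusp pieces, one for each maximal parabolic subgroup. -/
def IsTruncation (G : Subgroup PSL2C) (R : Set W) : Prop :=
  ∃ ch : {H : Subgroup PSL2C // IsMaxParabolic G H} → Set W,
    (∀ H, IsCuspPiece G H.1 (ch H)) ∧
    (∀ H, PreciselyInvariantW G H.1 (ch H)) ∧
    (∀ H₁ H₂, H₁ ≠ H₂ → Disjoint (ch H₁) (ch H₂)) ∧
    R = ⋃ H, ⋃ g ∈ (G : Set PSL2C), actW g '' ch H

/-- The natural truncation `T(G)` (for the removed region `R`), as a subset of `M(G)`. -/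
def truncSet (G : Subgroup PSL2C) (R : Set W) : Set (MSpace G) :=
  mproj G '' {x : ↥(domSet G) | (x : W) ∉ R}


/- ## Further notions: (anti-)Möbius maps, quasiconformal deformations, the
hyperbolic plane -/

/-- Complex conjugation on the Riemann sphere. -/
def conjSphere : RSphere → RSphere :=
  fun z => Option.elim z OnePoint.infty (fun w => (((starRingEnd ℂ) w : ℂ) : RSphere))

/-- An (orientation preserving) Möbius transformation of the sphere. -/
def IsMobiusMap (α : RSphere ≃ RSphere) : Prop := ∃ h : PSL2C, ∀ z, α z = psl h z

/-- An orientation reversing Möbius transformation of the sphere. -/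
def IsAntiMobiusMap (α : RSphere ≃ RSphere) : Prop :=
  ∃ h : PSL2C, ∀ z, α z = psl h (conjSphere z)

/-- The chordal metric on the Riemann sphere. -/
def chordal : RSphere → RSphere → ℝ := fun x y =>
  Option.elim x
    (Option.elim y 0 (fun w => 2 / Real.sqrt (1 + ‖w‖ ^ 2)))
    (fun z => Option.elim y (2 / Real.sqrt (1 + ‖z‖ ^ 2))
      (fun w => 2 * ‖z - w‖ / (Real.sqrt (1 + ‖z‖ ^ 2) * Real.sqrt (1 + ‖w‖ ^ 2))))

/-- Quasiconformality of a homeomorphism of the sphere, via the metric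
definition: the circular distortion is uniformly bounded. -/
def IsQuasiconformal (w : RSphere ≃ RSphere) : Prop :=
  Continuous w ∧ Continuous w.symm ∧
  ∃ K : ℝ, 1 ≤ K ∧ ∀ x : RSphere,
    Filter.limsup (fun r : ℝ =>
        sSup {d | ∃ y, chordal x y = r ∧ d = chordal (w x) (w y)} /
        sInf {d | ∃ y, chordal x y = r ∧ d = chordal (w x) (w y)})
      (nhdsWithin 0 (Set.Ioi 0)) ≤ K

/-- A representation `ρ : G → PSL(2,ℂ)` is a point of the quasiconformal
deformation space `𝒯(G)` if it is induced by conjugation by a quasiconformal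
homeomorphism of the sphere. -/
def InTeich (G : Subgroup PSL2C) (ρ : ↥G → PSL2C) : Prop :=
  (∀ a b : ↥G, ρ (a * b) = ρ a * ρ b) ∧ Function.Injective ρ ∧
  ∃ w : RSphere ≃ RSphere, IsQuasiconformal w ∧
    ∀ (g : ↥G) (z : RSphere), psl (ρ g) (w z) = w (psl (g : PSL2C) z)

/-- A point of the boundary `∂𝒯(G)`: an algebraic limit (in the topology of
pointwise convergence on representations) of quasiconformal deformations of `G`
which is not itself one; by Jørgensen's inequality such a representation is a
discrete faithful homomorphism. -/
def OnTeichBoundary (G : Subgroup PSL2C) (ρ : ↥G → PSL2C) : Prop :=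
  ρ ∈ closure {σ : ↥G → PSL2C | InTeich G σ} ∧ ¬ InTeich G ρ ∧
  (∀ a b : ↥G, ρ (a * b) = ρ a * ρ b) ∧ Function.Injective ρ

/-- The hyperbolic plane, as the upper half plane in `ℂ`. -/
def upperPlane : Set ℂ := {z | 0 < z.im}

/-- Orbit equivalence on the hyperbolic plane under a subgroup of `PSL(2,ℂ)`
(of interest when the subgroup is Fuchsian, so that it preserves `upperPlane`). -/
def prel (F : Subgroup PSL2C) : Setoid ↥upperPlane :=
  Relation.EqvGen.setoid fun z w : ↥upperPlane =>
    ∃ g ∈ F, psl g ((z : ℂ) : RSphere) = (((w : ℂ) : RSphere))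

/-- The quotient surface of the hyperbolic plane by a Fuchsian group. -/
def QuotPlane (F : Subgroup PSL2C) : Type := Quotient (prel F)

instance (F : Subgroup PSL2C) : TopologicalSpace (QuotPlane F) :=
  inferInstanceAs (TopologicalSpace (Quotient (prel F)))

/-- The extended real line `ℝ ∪ {∞}`, the limit set of a Fuchsian group of the
first kind. -/
def realCircleS : Set RSphere :=
  {z | z = OnePoint.infty ∨ ∃ r : ℝ, z = ((r : ℂ) : RSphere)}

/-!
A parabolic element with fixed point `∞` is a translation, and one with fixed point `0` has the
form `z ↦ z / (c z + 1)`. Move the fixed points of `h₁` and `h₂` to `∞` and `0`, so that `h₁` is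
`z ↦ z + 2`; then the product `h₁ h₂ = h₃⁻¹` is parabolic only for `c = -2`. So `F` is conjugate to
a single group `Γ` of integral matrices. Only finitely many integral Möbius maps move a small disc
off the real line so that it meets itself, hence the limit set of `Γ` is contained in `ℝ ∪ {∞}`.
Conversely `z ↦ z + 2` and `z ↦ z / (-2 z + 1)` run Euclid's algorithm with even quotients, which
reduces every `p / q` with `p + q` odd to one of the parabolic fixed points `0` and `∞`. These
fractions are dense in `ℝ`, and the limit set is closed.
-/

open Filter Topology
open scoped Pointwise

section HomogeneousCoordinates

/-- The point `[p : q]` of the Riemann sphere. The value at `(0, 0)` is the junk value `∞`. -/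
def ofHomog (p q : ℂ) : RSphere := if q = 0 then OnePoint.infty else ((p / q : ℂ) : RSphere)

lemma ofHomog_zero_right (p : ℂ) : ofHomog p 0 = OnePoint.infty := if_pos rfl

lemma ofHomog_of_ne_zero (p : ℂ) {q : ℂ} (hq : q ≠ 0) :
    ofHomog p q = ((p / q : ℂ) : RSphere) := if_neg hq

lemma ofHomog_one_right (w : ℂ) : ofHomog w 1 = (w : RSphere) := by
  rw [ofHomog_of_ne_zero w one_ne_zero, div_one]

lemma exists_eq_ofHomog (z : RSphere) : ∃ p q : ℂ, (p ≠ 0 ∨ q ≠ 0) ∧ z = ofHomog p q := by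
  induction z using OnePoint.rec with
  | infty => exact ⟨1, 0, .inl one_ne_zero, (ofHomog_zero_right 1).symm⟩
  | coe w => exact ⟨w, 1, .inr one_ne_zero, (ofHomog_one_right w).symm⟩

lemma ofHomog_smul {r : ℂ} (hr : r ≠ 0) (p q : ℂ) : ofHomog (r * p) (r * q) = ofHomog p q := by
  simp only [ofHomog, mul_eq_zero, hr, false_or, mul_div_mul_left _ _ hr]

lemma ofHomog_eq_iff {p q p' q' : ℂ} (h : p ≠ 0 ∨ q ≠ 0) (h' : p' ≠ 0 ∨ q' ≠ 0) :
    ofHomog p q = ofHomog p' q' ↔ p * q' = p' * q := by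
  by_cases hq : q = 0 <;> by_cases hq' : q' = 0
  · simp [hq, hq', ofHomog]
  · simp_all [ofHomog]
  · simp_all [ofHomog]
  · rw [ofHomog_of_ne_zero p hq, ofHomog_of_ne_zero p' hq', OnePoint.coe_eq_coe,
      div_eq_div_iff hq hq']

lemma mobiusSL_infty (A : SL2C) : mobiusSL A OnePoint.infty = ofHomog (A.1 0 0) (A.1 1 0) := rfl

lemma mobiusSL_coe (A : SL2C) (w : ℂ) :
    mobiusSL A (w : RSphere) = ofHomog (A.1 0 0 * w + A.1 0 1) (A.1 1 0 * w + A.1 1 1) := rfl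

lemma mobiusSL_ofHomog (A : SL2C) {p q : ℂ} (h : p ≠ 0 ∨ q ≠ 0) :
    mobiusSL A (ofHomog p q) =
      ofHomog (A.1 0 0 * p + A.1 0 1 * q) (A.1 1 0 * p + A.1 1 1 * q) := by
  by_cases hq : q = 0
  · have hp : p ≠ 0 := by simpa [hq] using h
    rw [hq, ofHomog_zero_right, mobiusSL_infty, ← ofHomog_smul hp]
    congr 1 <;> ring
  · rw [ofHomog_of_ne_zero p hq, mobiusSL_coe, ← ofHomog_smul hq]
    congr 1 <;> field_simp

lemma mulVec_ne_zero_of_det_ne_zero {R : Type*} [CommRing R] [NoZeroDivisors R]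
    {a b c d p q : R} (hdet : a * d - b * c ≠ 0) (h : p ≠ 0 ∨ q ≠ 0) :
    a * p + b * q ≠ 0 ∨ c * p + d * q ≠ 0 := by
  contrapose! h
  obtain ⟨h₁, h₂⟩ := h
  exact ⟨(mul_eq_zero.1 (by linear_combination d * h₁ - b * h₂)).resolve_left hdet,
    (mul_eq_zero.1 (by linear_combination a * h₂ - c * h₁)).resolve_left hdet⟩

lemma SL2C_det (A : SL2C) : A.1 0 0 * A.1 1 1 - A.1 0 1 * A.1 1 0 = 1 := by
  rw [← Matrix.det_fin_two, A.2]

lemma mobiusSL_mul (A B : SL2C) (z : RSphere) :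
    mobiusSL (A * B) z = mobiusSL A (mobiusSL B z) := by
  obtain ⟨p, q, h, rfl⟩ := exists_eq_ofHomog z
  have hB := mulVec_ne_zero_of_det_ne_zero ((SL2C_det B).trans_ne one_ne_zero) h
  rw [mobiusSL_ofHomog _ h, mobiusSL_ofHomog _ h, mobiusSL_ofHomog _ hB]
  simp only [Matrix.SpecialLinearGroup.coe_mul, Matrix.mul_apply, Fin.sum_univ_two]
  congr 1 <;> ring

lemma mobiusSL_ofHomog_eq_self_iff (A : SL2C) {p q : ℂ} (h : p ≠ 0 ∨ q ≠ 0) :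
    mobiusSL A (ofHomog p q) = ofHomog p q ↔
      (A.1 0 0 * p + A.1 0 1 * q) * q = p * (A.1 1 0 * p + A.1 1 1 * q) := by
  have hA := mulVec_ne_zero_of_det_ne_zero ((SL2C_det A).trans_ne one_ne_zero) h
  rw [mobiusSL_ofHomog A h, ofHomog_eq_iff hA h]

lemma mobiusSL_eq_id_iff (A : SL2C) :
    (∀ z, mobiusSL A z = z) ↔ A ∈ Subgroup.center SL2C := by
  rw [Matrix.SpecialLinearGroup.mem_center_iff]
  constructor
  · intro h
    have hdet := SL2C_det A
    have h₁₀ : A.1 1 0 = 0 := by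
      simpa [eq_comm] using (mobiusSL_ofHomog_eq_self_iff A (by simp)).1 (h (ofHomog 1 0))
    have h₀₁ : A.1 0 1 = 0 := by
      simpa using (mobiusSL_ofHomog_eq_self_iff A (by simp)).1 (h (ofHomog 0 1))
    have hdiag : A.1 0 0 = A.1 1 1 := by
      simpa [h₁₀, h₀₁] using (mobiusSL_ofHomog_eq_self_iff A (by simp)).1 (h (ofHomog 1 1))
    refine ⟨A.1 0 0, by simpa [h₁₀, ← hdiag, sq] using hdet, ?_⟩
    ext i j
    fin_cases i <;> fin_cases j <;> simp [h₁₀, h₀₁, hdiag]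
  · rintro ⟨r, hr, hA⟩ z
    obtain ⟨p, q, h, rfl⟩ := exists_eq_ofHomog z
    have hr0 : r ≠ 0 := by rintro rfl; simp at hr
    rw [mobiusSL_ofHomog A h, ← hA]
    simpa using ofHomog_smul hr0 p q

end HomogeneousCoordinates

section Action

lemma psl_mk (A : SL2C) : psl (A : PSL2C) = mobiusSL A := by
  set B : SL2C := Quotient.out (A : PSL2C)
  have hB : B⁻¹ * A ∈ Subgroup.center SL2C := QuotientGroup.eq.1 (Quotient.out_eq (A : PSL2C))
  funext z
  calc mobiusSL B z = mobiusSL B (mobiusSL (B⁻¹ * A) z) := by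
        rw [(mobiusSL_eq_id_iff _).2 hB]
    _ = mobiusSL A z := by rw [← mobiusSL_mul, mul_inv_cancel_left]

lemma psl_mul (g h : PSL2C) (z : RSphere) : psl (g * h) z = psl g (psl h z) := by
  obtain ⟨A, rfl⟩ := QuotientGroup.mk_surjective g
  obtain ⟨B, rfl⟩ := QuotientGroup.mk_surjective h
  rw [← QuotientGroup.mk_mul]
  simp only [psl_mk, mobiusSL_mul]

lemma psl_eq_id_iff {g : PSL2C} : (∀ z, psl g z = z) ↔ g = 1 := by
  obtain ⟨A, rfl⟩ := QuotientGroup.mk_surjective g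
  rw [psl_mk, mobiusSL_eq_id_iff, QuotientGroup.eq_one_iff]

@[simp]
lemma psl_one (z : RSphere) : psl 1 z = z := psl_eq_id_iff.2 rfl z

@[simp]
lemma psl_inv_psl (g : PSL2C) (z : RSphere) : psl g⁻¹ (psl g z) = z := by
  rw [← psl_mul, inv_mul_cancel, psl_one]

@[simp]
lemma psl_psl_inv (g : PSL2C) (z : RSphere) : psl g (psl g⁻¹ z) = z := by
  rw [← psl_mul, mul_inv_cancel, psl_one]

lemma psl_injective (g : PSL2C) : Function.Injective (psl g) :=
  Function.LeftInverse.injective (psl_inv_psl g)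

lemma eq_of_psl_eq {g h : PSL2C} (hgh : ∀ z, psl g z = psl h z) : g = h := by
  rw [← inv_mul_eq_one, ← psl_eq_id_iff]
  intro z
  rw [psl_mul, ← hgh, psl_inv_psl]

lemma psl_image_eq_preimage (g : PSL2C) (S : Set RSphere) : psl g '' S = psl g⁻¹ ⁻¹' S :=
  congrFun (Set.image_eq_preimage_of_inverse (psl_inv_psl g) (psl_psl_inv g)) S

end Action

section Continuity

lemma tendsto_ofHomog {α : Type*} {l : Filter α} {f g : α → ℂ} {p q : ℂ} (h : p ≠ 0 ∨ q ≠ 0)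
    (hf : Tendsto f l (𝓝 p)) (hg : Tendsto g l (𝓝 q)) :
    Tendsto (fun x ↦ ofHomog (f x) (g x)) l (𝓝 (ofHomog p q)) := by
  by_cases hq : q = 0
  · subst hq
    have hp : p ≠ 0 := by simpa using h
    rw [ofHomog_zero_right]
    simp only [ofHomog]
    refine tendsto_const_nhds.if ?_
    refine OnePoint.tendsto_coe_infty.comp ?_
    rw [coclosedCompact_eq_cocompact, ← Metric.cobounded_eq_cocompact,
      ← tendsto_norm_atTop_iff_cobounded]
    have hg_inv : Tendsto (fun x ↦ ‖(g x)⁻¹‖) (l ⊓ 𝓟 {x | ¬g x = 0}) atTop :=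
      tendsto_norm_atTop_iff_cobounded.2 <| tendsto_inv₀_nhdsNE_zero.comp <|
        tendsto_nhdsWithin_iff.2
          ⟨hg.mono_left inf_le_left, eventually_inf_principal.2 (.of_forall fun _ hx ↦ hx)⟩
    simp only [div_eq_mul_inv, norm_mul]
    exact (hf.mono_left inf_le_left).norm.pos_mul_atTop (norm_pos_iff.2 hp) hg_inv
  · rw [ofHomog_of_ne_zero p hq]
    refine ((OnePoint.continuous_coe.tendsto (p / q)).comp (hf.div hg hq)).congr' ?_
    filter_upwards [hg.eventually_ne hq] with x hx
    exact (ofHomog_of_ne_zero (f x) hx).symm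

lemma continuous_mobiusSL (A : SL2C) : Continuous (mobiusSL A) := by
  have hdet : A.1 0 0 * A.1 1 1 - A.1 0 1 * A.1 1 0 ≠ 0 := (SL2C_det A).trans_ne one_ne_zero
  refine continuous_iff_continuousAt.2 fun z ↦ ?_
  induction z using OnePoint.rec with
  | infty =>
    rw [OnePoint.continuousAt_infty', coclosedCompact_eq_cocompact,
      ← Metric.cobounded_eq_cocompact, mobiusSL_infty]
    have hlim (a b : ℂ) : Tendsto (fun w : ℂ ↦ a + b * w⁻¹) (Bornology.cobounded ℂ) (𝓝 a) := by
      simpa using (tendsto_inv₀_cobounded.const_mul b).const_add a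
    have hne : A.1 0 0 ≠ 0 ∨ A.1 1 0 ≠ 0 := by
      simpa using mulVec_ne_zero_of_det_ne_zero hdet (p := 1) (q := 0) (by simp)
    refine (tendsto_ofHomog hne (hlim _ (A.1 0 1)) (hlim _ (A.1 1 1))).congr' ?_
    filter_upwards [Bornology.eventually_ne_cobounded 0] with w hw
    rw [Function.comp_apply, mobiusSL_coe, ← ofHomog_smul hw]
    congr 1 <;> field_simp
  | coe w =>
    have hne := mulVec_ne_zero_of_det_ne_zero hdet (p := w) (q := 1) (by simp)
    rw [mul_one, mul_one] at hne
    rw [OnePoint.continuousAt_coe]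
    exact tendsto_ofHomog hne (Continuous.tendsto (by fun_prop) w)
      (Continuous.tendsto (by fun_prop) w)

lemma continuous_psl (g : PSL2C) : Continuous (psl g) := continuous_mobiusSL _

lemma isOpen_psl_image (g : PSL2C) {U : Set RSphere} (hU : IsOpen U) : IsOpen (psl g '' U) := by
  rw [psl_image_eq_preimage]
  exact hU.preimage (continuous_psl g⁻¹)

end Continuity

section Transitivity

lemma psl_mk_ofHomog (A : SL2C) {p q : ℂ} (h : p ≠ 0 ∨ q ≠ 0) :
    psl (A : PSL2C) (ofHomog p q) =
      ofHomog (A.1 0 0 * p + A.1 0 1 * q) (A.1 1 0 * p + A.1 1 1 * q) := by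
  rw [psl_mk, mobiusSL_ofHomog A h]

lemma psl_mk_coe_eq_coe_iff (A : SL2C) {v w : ℂ} :
    psl (A : PSL2C) (v : RSphere) = (w : RSphere) ↔
      w * (A.1 1 0 * v + A.1 1 1) = A.1 0 0 * v + A.1 0 1 := by
  have hA := mulVec_ne_zero_of_det_ne_zero ((SL2C_det A).trans_ne one_ne_zero)
    (p := v) (q := 1) (by simp)
  rw [← ofHomog_one_right, ← ofHomog_one_right, psl_mk_ofHomog A (by simp),
    ofHomog_eq_iff hA (by simp), mul_one, mul_one, mul_one, eq_comm]

lemma exists_psl_ofHomog_eq {a b c d : ℂ} (hdet : a * d - b * c ≠ 0) :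
    ∃ g : PSL2C, ∀ p q : ℂ, p ≠ 0 ∨ q ≠ 0 →
      psl g (ofHomog p q) = ofHomog (a * p + b * q) (c * p + d * q) := by
  obtain ⟨r, hr⟩ := IsAlgClosed.exists_pow_nat_eq (a * d - b * c) two_pos
  have hr₀ : r ≠ 0 := by
    rintro rfl
    exact hdet (by simpa using hr.symm)
  have hdet_one : !![r⁻¹ * a, r⁻¹ * b; r⁻¹ * c, r⁻¹ * d].det = 1 := by
    rw [Matrix.det_fin_two_of]
    field_simp
    linear_combination -hr
  let A : SL2C := ⟨_, hdet_one⟩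
  refine ⟨A, fun p q h ↦ ?_⟩
  calc psl A (ofHomog p q)
      = ofHomog (r⁻¹ * a * p + r⁻¹ * b * q) (r⁻¹ * c * p + r⁻¹ * d * q) := psl_mk_ofHomog A h
    _ = ofHomog (r⁻¹ * (a * p + b * q)) (r⁻¹ * (c * p + d * q)) := by
        congr 1 <;> ring
    _ = ofHomog (a * p + b * q) (c * p + d * q) := ofHomog_smul (inv_ne_zero hr₀) _ _

lemma exists_psl_eq_infty_zero_one {x y z : RSphere} (hxy : x ≠ y) (hxz : x ≠ z) (hyz : y ≠ z) :
    ∃ g : PSL2C, psl g x = OnePoint.infty ∧ psl g y = ((0 : ℂ) : RSphere) ∧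
      psl g z = ((1 : ℂ) : RSphere) := by
  obtain ⟨x₁, x₂, hx, rfl⟩ := exists_eq_ofHomog x
  obtain ⟨y₁, y₂, hy, rfl⟩ := exists_eq_ofHomog y
  obtain ⟨z₁, z₂, hz, rfl⟩ := exists_eq_ofHomog z
  rw [Ne, ofHomog_eq_iff hx hy, ← Ne, ← sub_ne_zero] at hxy
  rw [Ne, ofHomog_eq_iff hx hz, ← Ne, ← sub_ne_zero] at hxz
  rw [Ne, ofHomog_eq_iff hy hz, ← Ne, ← sub_ne_zero] at hyz
  -- The map `v ↦ [det(x, z) det(y, v) : det(y, z) det(x, v)]`, a cross-ratio.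
  set α : ℂ := x₁ * z₂ - z₁ * x₂
  set β : ℂ := y₁ * z₂ - z₁ * y₂
  have hdet : (-α * y₂) * (β * x₁) - (α * y₁) * (-β * x₂) ≠ 0 := by
    rw [show (-α * y₂) * (β * x₁) - (α * y₁) * (-β * x₂) = -(α * β * (x₁ * y₂ - y₁ * x₂)) by ring]
    exact neg_ne_zero.2 (mul_ne_zero (mul_ne_zero hxz hyz) hxy)
  obtain ⟨g, hg⟩ := exists_psl_ofHomog_eq hdet
  refine ⟨g, ?_, ?_, ?_⟩
  · rw [hg _ _ hx, ← ofHomog_zero_right 1,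
      ofHomog_eq_iff (mulVec_ne_zero_of_det_ne_zero hdet hx) (by simp)]
    ring
  · rw [hg _ _ hy, ← ofHomog_one_right,
      ofHomog_eq_iff (mulVec_ne_zero_of_det_ne_zero hdet hy) (by simp)]
    ring
  · rw [hg _ _ hz, ← ofHomog_one_right,
      ofHomog_eq_iff (mulVec_ne_zero_of_det_ne_zero hdet hz) (by simp)]
    ring

lemma exists_psl_eq_of_ne {x y z x' y' z' : RSphere} (hxy : x ≠ y) (hxz : x ≠ z) (hyz : y ≠ z)
    (hxy' : x' ≠ y') (hxz' : x' ≠ z') (hyz' : y' ≠ z') :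
    ∃ g : PSL2C, psl g x = x' ∧ psl g y = y' ∧ psl g z = z' := by
  obtain ⟨g, hgx, hgy, hgz⟩ := exists_psl_eq_infty_zero_one hxy hxz hyz
  obtain ⟨k, hkx, hky, hkz⟩ := exists_psl_eq_infty_zero_one hxy' hxz' hyz'
  refine ⟨k⁻¹ * g, ?_, ?_, ?_⟩ <;> rw [psl_mul]
  · rw [hgx, ← hkx, psl_inv_psl]
  · rw [hgy, ← hky, psl_inv_psl]
  · rw [hgz, ← hkz, psl_inv_psl]

lemma exists_psl_eq_infty (z : RSphere) : ∃ g : PSL2C, psl g z = OnePoint.infty := by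
  induction z using OnePoint.rec with
  | infty => exact ⟨1, psl_one _⟩
  | coe w =>
    obtain ⟨g, hg⟩ := exists_psl_ofHomog_eq (a := 0) (b := 1) (c := 1) (d := -w) (by simp)
    refine ⟨g, ?_⟩
    rw [← ofHomog_one_right, hg _ _ (by simp)]
    simpa using ofHomog_zero_right 1

end Transitivity

section Unipotent

/-- The translation `z ↦ z + b`, the class of the upper unipotent matrix with entry `b`. -/
def upperUnipotent (b : ℂ) : PSL2C :=
  QuotientGroup.mk (⟨!![1, b; 0, 1], by simp⟩ : SL2C)

/-- The map `z ↦ z / (c z + 1)`, the class of the lower unipotent matrix with entry `c`. -/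
def lowerUnipotent (c : ℂ) : PSL2C :=
  QuotientGroup.mk (⟨!![1, 0; c, 1], by simp⟩ : SL2C)

lemma psl_upperUnipotent (b : ℂ) {p q : ℂ} (h : p ≠ 0 ∨ q ≠ 0) :
    psl (upperUnipotent b) (ofHomog p q) = ofHomog (p + b * q) q :=
  (psl_mk_ofHomog _ h).trans (by simp)

lemma psl_lowerUnipotent (c : ℂ) {p q : ℂ} (h : p ≠ 0 ∨ q ≠ 0) :
    psl (lowerUnipotent c) (ofHomog p q) = ofHomog p (c * p + q) :=
  (psl_mk_ofHomog _ h).trans (by simp)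

lemma psl_upperUnipotent_infty (b : ℂ) :
    psl (upperUnipotent b) OnePoint.infty = OnePoint.infty := by
  simpa [ofHomog_zero_right] using psl_upperUnipotent b (p := 1) (q := 0) (by simp)

lemma psl_upperUnipotent_coe (b w : ℂ) :
    psl (upperUnipotent b) (w : RSphere) = ((w + b : ℂ) : RSphere) := by
  simpa [ofHomog_one_right] using psl_upperUnipotent b (p := w) (q := 1) (by simp)

lemma psl_lowerUnipotent_zero (c : ℂ) :
    psl (lowerUnipotent c) ((0 : ℂ) : RSphere) = ((0 : ℂ) : RSphere) := by
  simpa [ofHomog_one_right] using psl_lowerUnipotent c (p := 0) (q := 1) (by simp)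

lemma upperUnipotent_zero : upperUnipotent 0 = 1 :=
  psl_eq_id_iff.1 fun z ↦ by
    obtain ⟨p, q, h, rfl⟩ := exists_eq_ofHomog z
    simp [psl_upperUnipotent 0 h]

lemma lowerUnipotent_zero : lowerUnipotent 0 = 1 :=
  psl_eq_id_iff.1 fun z ↦ by
    obtain ⟨p, q, h, rfl⟩ := exists_eq_ofHomog z
    simp [psl_lowerUnipotent 0 h]

lemma psl_upperUnipotent_pow_coe (b w : ℂ) (n : ℕ) :
    psl (upperUnipotent b ^ n) (w : RSphere) = ((w + n * b : ℂ) : RSphere) := by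
  induction n with
  | zero => simp
  | succ n ih =>
    rw [pow_succ', psl_mul, ih, psl_upperUnipotent_coe]
    push_cast
    ring_nf

end Unipotent

section Parabolic

lemma isParabolic_upperUnipotent {b : ℂ} (hb : b ≠ 0) : IsParabolic (upperUnipotent b) := by
  refine ⟨fun h ↦ hb ?_, OnePoint.infty, psl_upperUnipotent_infty b, fun z hz ↦ ?_⟩
  · simpa [h] using (psl_upperUnipotent_coe b 0).symm
  · induction z using OnePoint.rec with
    | infty => rfl
    | coe w =>
      rw [psl_upperUnipotent_coe, OnePoint.coe_eq_coe, add_eq_left] at hz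
      exact absurd hz hb

lemma isParabolic_lowerUnipotent {c : ℂ} (hc : c ≠ 0) : IsParabolic (lowerUnipotent c) := by
  refine ⟨fun h ↦ hc ?_, ((0 : ℂ) : RSphere), psl_lowerUnipotent_zero c, fun z hz ↦ ?_⟩
  · have hfix := psl_lowerUnipotent c (p := 1) (q := 0) (by simp)
    rw [h, psl_one, ofHomog_eq_iff (by simp) (by simp)] at hfix
    simpa using hfix
  · obtain ⟨p, q, h, rfl⟩ := exists_eq_ofHomog z
    rw [psl_lowerUnipotent c h, ofHomog_eq_iff (by grind) h] at hz
    have hp : p = 0 := by simpa [mul_add, hc] using hz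
    rw [← ofHomog_one_right, ofHomog_eq_iff h (by simp), hp, zero_mul, zero_mul]

namespace IsParabolic

variable {g : PSL2C}

lemma eq_of_psl_eq_self (hg : IsParabolic g) {z w : RSphere} (hz : psl g z = z)
    (hw : psl g w = w) : z = w := hg.2.unique hz hw

lemma conj (hg : IsParabolic g) (k : PSL2C) : IsParabolic (k * g * k⁻¹) := by
  obtain ⟨hg_one, z, hz, huniq⟩ := hg
  refine ⟨mt conj_eq_one_iff.1 hg_one, psl k z, ?_, fun w hw ↦ ?_⟩
  · simp only [psl_mul, psl_inv_psl, hz]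
  · rw [← huniq (psl k⁻¹ w) ?_, psl_psl_inv]
    simpa only [psl_mul, psl_inv_psl] using congrArg (psl k⁻¹) hw

lemma inv (hg : IsParabolic g) : IsParabolic g⁻¹ := by
  have hfix (z : RSphere) : psl g⁻¹ z = z ↔ psl g z = z := by
    rw [← (psl_injective g).eq_iff, psl_psl_inv, eq_comm]
  exact ⟨inv_ne_one.2 hg.1, by simpa only [hfix] using hg.2⟩

lemma exists_eq_upperUnipotent (hg : IsParabolic g)
    (hfix : psl g OnePoint.infty = OnePoint.infty) : ∃ b, g = upperUnipotent b := by
  obtain ⟨A, rfl⟩ := QuotientGroup.mk_surjective g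
  have hdet := SL2C_det A
  have h₁₀ : A.1 1 0 = 0 := by
    rw [psl_mk, ← ofHomog_zero_right 1, mobiusSL_ofHomog_eq_self_iff A (by simp)] at hfix
    simpa [eq_comm] using hfix
  have hdiag : A.1 1 1 = A.1 0 0 := by
    by_contra hne
    have hne' : A.1 1 1 - A.1 0 0 ≠ 0 := sub_ne_zero.2 hne
    -- A matrix `(a, b; 0, d)` with `a ≠ d` also fixes `[b : d - a]`.
    have hfix' : psl (A : PSL2C) (ofHomog (A.1 0 1) (A.1 1 1 - A.1 0 0)) =
        ofHomog (A.1 0 1) (A.1 1 1 - A.1 0 0) := by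
      rw [psl_mk, mobiusSL_ofHomog_eq_self_iff A (.inr hne'), h₁₀]
      ring
    have heq := hg.eq_of_psl_eq_self hfix' hfix
    rw [ofHomog_of_ne_zero _ hne'] at heq
    exact OnePoint.coe_ne_infty _ heq
  have h₀₀ : A.1 0 0 ≠ 0 := by
    intro h
    simp [h, h₁₀] at hdet
  refine ⟨A.1 0 1 / A.1 0 0, eq_of_psl_eq fun z ↦ ?_⟩
  obtain ⟨p, q, h, rfl⟩ := exists_eq_ofHomog z
  rw [psl_mk, mobiusSL_ofHomog A h, psl_upperUnipotent _ h, h₁₀, hdiag,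
    ← ofHomog_smul h₀₀ (p + _)]
  congr 1 <;> field_simp
  ring

lemma exists_eq_lowerUnipotent (hg : IsParabolic g)
    (hfix : psl g ((0 : ℂ) : RSphere) = ((0 : ℂ) : RSphere)) : ∃ c, g = lowerUnipotent c := by
  -- Conjugate by the involution `z ↦ 1 / z`.
  obtain ⟨k, hk⟩ := exists_psl_ofHomog_eq (a := 0) (b := 1) (c := 1) (d := 0) (by simp)
  simp only [zero_mul, one_mul, zero_add, add_zero] at hk
  have hk₀ : psl k ((0 : ℂ) : RSphere) = OnePoint.infty := by
    rw [← ofHomog_one_right, hk _ _ (by simp), ofHomog_zero_right]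
  obtain ⟨c, hc⟩ := (hg.conj k).exists_eq_upperUnipotent
    (by rw [← hk₀, psl_mul, psl_inv_psl, psl_mul, hfix])
  refine ⟨c, eq_of_psl_eq fun z ↦ psl_injective k ?_⟩
  obtain ⟨p, q, h, rfl⟩ := exists_eq_ofHomog z
  calc psl k (psl g (ofHomog p q)) = psl (k * g * k⁻¹) (psl k (ofHomog p q)) := by
        simp only [psl_mul, psl_inv_psl]
    _ = psl k (psl (lowerUnipotent c) (ofHomog p q)) := by
        rw [hc, hk p q h, psl_upperUnipotent c h.symm, psl_lowerUnipotent c h,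
          hk _ _ (by grind), add_comm]

lemma not_isOfFinOrder (hg : IsParabolic g) : ¬ IsOfFinOrder g := by
  obtain ⟨z, hz, -⟩ := hg.2
  obtain ⟨k, hk⟩ := exists_psl_eq_infty z
  have hfix : psl (k * g * k⁻¹) OnePoint.infty = OnePoint.infty := by
    rw [← hk, psl_mul, psl_inv_psl, psl_mul, hz]
  obtain ⟨b, hb⟩ := (hg.conj k).exists_eq_upperUnipotent hfix
  intro hfin
  obtain ⟨n, hn, hgn⟩ := isOfFinOrder_iff_pow_eq_one.1 hfin
  have hpow : upperUnipotent b ^ n = 1 := by rw [← hb, conj_pow, hgn, mul_one, mul_inv_cancel]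
  have hb₀ : b = 0 := by
    simpa [hpow, hn.ne'] using (psl_upperUnipotent_pow_coe b 0 n).symm
  exact (hg.conj k).1 (by rw [hb, hb₀, upperUnipotent_zero])

end IsParabolic

end Parabolic

section NormalForm

lemma IsParabolic.mul_eq_neg_four {b c : ℂ}
    (h : IsParabolic (upperUnipotent b * lowerUnipotent c)) (hb : b ≠ 0) (hc : c ≠ 0) :
    b * c = -4 := by
  have hfix {p q : ℂ} (hpq : p ≠ 0 ∨ q ≠ 0) :
      psl (upperUnipotent b * lowerUnipotent c) (ofHomog p q) = ofHomog p q ↔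
        (p + b * (c * p + q)) * q = p * (c * p + q) := by
    rw [psl_mul, psl_lowerUnipotent c hpq, psl_upperUnipotent b (by grind),
      ofHomog_eq_iff (by grind) hpq]
  obtain ⟨z, hz, -⟩ := h.2
  obtain ⟨p, q, hpq, rfl⟩ := exists_eq_ofHomog z
  have hz' := (hfix hpq).1 hz
  have hq : q ≠ 0 := by
    rintro rfl
    simp_all
  -- The fixed point equation is invariant under `p ↦ b q - p`, so uniqueness forces `p = b q / 2`.
  have hsymm : psl (upperUnipotent b * lowerUnipotent c) (ofHomog (b * q - p) q) =
      ofHomog (b * q - p) q := (hfix (.inr hq)).2 (by linear_combination hz')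
  have hmid := h.eq_of_psl_eq_self hz hsymm
  rw [ofHomog_eq_iff hpq (.inr hq)] at hmid
  have hp : p = b * q / 2 := by
    have := mul_right_cancel₀ hq hmid
    linear_combination this / 2
  rw [hp] at hz'
  refine mul_left_cancel₀ (mul_ne_zero hb (pow_ne_zero 2 hq)) ?_
  linear_combination 4 * hz'

theorem exists_conj_eq_unipotent {h₁ h₂ : PSL2C} (hp₁ : IsParabolic h₁) (hp₂ : IsParabolic h₂)
    (hp₁₂ : IsParabolic (h₁ * h₂)) {p₁ p₂ : RSphere} (hf₁ : psl h₁ p₁ = p₁)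
    (hf₂ : psl h₂ p₂ = p₂) (hne : p₁ ≠ p₂) :
    ∃ g : PSL2C, g * h₁ * g⁻¹ = upperUnipotent 2 ∧ g * h₂ * g⁻¹ = lowerUnipotent (-2) := by
  have hne₁ : p₁ ≠ psl h₁ p₂ := fun h ↦ hne (psl_injective h₁ (hf₁.trans h))
  have hne₂ : p₂ ≠ psl h₁ p₂ := fun h ↦ hne (hp₁.eq_of_psl_eq_self hf₁ h.symm)
  obtain ⟨g, hg₁, hg₂, hg₃⟩ := exists_psl_eq_of_ne hne hne₁ hne₂
    (OnePoint.infty_ne_coe (0 : ℂ)) (OnePoint.infty_ne_coe (2 : ℂ)) (by simp)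
  obtain ⟨b, hb⟩ := (hp₁.conj g).exists_eq_upperUnipotent
    (by rw [← hg₁, psl_mul, psl_inv_psl, psl_mul, hf₁])
  obtain ⟨c, hc⟩ := (hp₂.conj g).exists_eq_lowerUnipotent
    (by rw [← hg₂, psl_mul, psl_inv_psl, psl_mul, hf₂])
  have hb_two : b = 2 := by
    have : psl (upperUnipotent b) ((0 : ℂ) : RSphere) = ((2 : ℂ) : RSphere) := by
      rw [← hb, ← hg₂, psl_mul, psl_inv_psl, psl_mul, hg₃]
    simpa [psl_upperUnipotent_coe] using this
  have hc₀ : c ≠ 0 := fun h ↦ (hp₂.conj g).1 (by rw [hc, h, lowerUnipotent_zero])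
  have hprod : IsParabolic (upperUnipotent b * lowerUnipotent c) := by
    rw [← hb, ← hc, conj_mul]
    exact hp₁₂.conj g
  have hbc := hprod.mul_eq_neg_four (by simp [hb_two]) hc₀
  refine ⟨g, by rw [hb, hb_two], ?_⟩
  rw [hc, show c = -2 by linear_combination hbc / 2 - c * hb_two / 2]

end NormalForm

section LimitSet

variable {G H : Subgroup PSL2C}

lemma omegaSet_anti (hGH : G ≤ H) : omegaSet H ⊆ omegaSet G := by
  rintro z ⟨U, hU, hz, hfin⟩
  exact ⟨U, hU, hz, hfin.subset fun g hg ↦ ⟨hGH hg.1, hg.2⟩⟩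

lemma limitSet_mono (hGH : G ≤ H) : limitSet G ⊆ limitSet H :=
  Set.compl_subset_compl.2 (omegaSet_anti hGH)

lemma isClosed_limitSet (G : Subgroup PSL2C) : IsClosed (limitSet G) := by
  refine isClosed_compl_iff.2 (isOpen_iff_forall_mem_open.2 ?_)
  rintro z ⟨U, hU, hz, hfin⟩
  exact ⟨U, fun w hw ↦ ⟨U, hU, hw, hfin⟩, hU, hz⟩

lemma psl_image_omegaSet_subset (h : PSL2C) (G : Subgroup PSL2C) :
    psl h '' omegaSet G ⊆ omegaSet (MulAut.conj h • G) := by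
  rintro _ ⟨z, ⟨U, hU, hz, hfin⟩, rfl⟩
  refine ⟨psl h '' U, isOpen_psl_image h hU, Set.mem_image_of_mem _ hz,
    (hfin.image (MulAut.conj h)).subset ?_⟩
  rintro _ ⟨⟨g, hg, rfl⟩, _, ⟨_, ⟨u, hu, rfl⟩, rfl⟩, v, hv, hvu⟩
  refine ⟨g, ⟨hg, v, ⟨u, hu, psl_injective h ?_⟩, hv⟩, rfl⟩
  simp [hvu, psl_mul]

lemma limitSet_conj (h : PSL2C) (G : Subgroup PSL2C) :
    limitSet (MulAut.conj h • G) = psl h '' limitSet G := by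
  have hsub := psl_image_omegaSet_subset h⁻¹ (MulAut.conj h • G)
  rw [smul_smul, ← map_mul, inv_mul_cancel, map_one, one_smul, psl_image_eq_preimage,
    inv_inv] at hsub
  have heq : omegaSet (MulAut.conj h • G) = psl h '' omegaSet G := by
    refine subset_antisymm (fun z hz ↦ ⟨psl h⁻¹ z, hsub ?_, psl_psl_inv h z⟩)
      (psl_image_omegaSet_subset h G)
    rwa [Set.mem_preimage, psl_psl_inv]
  rw [limitSet, heq, psl_image_eq_preimage, limitSet, psl_image_eq_preimage, Set.preimage_compl]

lemma psl_mem_limitSet_iff {g : PSL2C} (hg : g ∈ G) {z : RSphere} :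
    psl g z ∈ limitSet G ↔ z ∈ limitSet G := by
  conv_lhs => rw [← Subgroup.conj_smul_eq_self_of_mem hg, limitSet_conj]
  exact (psl_injective g).mem_set_image

lemma mem_limitSet_of_psl_eq_self {g : PSL2C} (hg : g ∈ G) (hfin : ¬ IsOfFinOrder g)
    {z : RSphere} (hz : psl g z = z) : z ∈ limitSet G := by
  rintro ⟨U, -, hzU, hU⟩
  have hfix (n : ℕ) : psl (g ^ n) z = z := by
    induction n with
    | zero => rw [pow_zero, psl_one]
    | succ n ih => rw [pow_succ, psl_mul, hz, ih]
  refine hU.not_infinite (Set.infinite_of_injective_forall_mem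
    (injective_pow_iff_not_isOfFinOrder.2 hfin) fun n ↦ ?_)
  exact ⟨pow_mem hg n, z, ⟨z, hzU, hfix n⟩, hzU⟩

lemma IsParabolic.mem_limitSet {g : PSL2C} (hp : IsParabolic g) (hg : g ∈ G) {z : RSphere}
    (hz : psl g z = z) : z ∈ limitSet G :=
  mem_limitSet_of_psl_eq_self hg hp.not_isOfFinOrder hz

end LimitSet

section Modular

open scoped ComplexConjugate

/-- The modular group `PSL(2,ℤ)`, as a subgroup of `PSL(2,ℂ)`. -/
def modularSubgroup : Subgroup PSL2C :=
  ((QuotientGroup.mk' (Subgroup.center SL2C)).comp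
    (Matrix.SpecialLinearGroup.map (Int.castRingHom ℂ))).range

lemma isRealElt_of_mem_modularSubgroup {g : PSL2C} (hg : g ∈ modularSubgroup) : IsRealElt g := by
  obtain ⟨A, rfl⟩ := hg
  exact ⟨Matrix.SpecialLinearGroup.map (Int.castRingHom ℂ) A, by simp, rfl⟩

lemma finite_setOf_forall_abs_le {n : Type*} [Fintype n] [DecidableEq n] (N : ℝ) :
    {A : Matrix.SpecialLinearGroup n ℤ | ∀ i j, |(A.1 i j : ℝ)| ≤ N}.Finite := by
  have hbox : {M : n → n → ℤ | ∀ i j, M i j ∈ Set.Icc (-⌊N⌋) ⌊N⌋}.Finite := by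
    simpa [Set.pi] using Set.Finite.pi fun _ : n ↦ Set.Finite.pi fun _ : n ↦
      Set.finite_Icc (-⌊N⌋) ⌊N⌋
  refine (hbox.preimage (f := fun A : Matrix.SpecialLinearGroup n ℤ ↦ A.1)
    Subtype.val_injective.injOn).subset fun A hA i j ↦ ?_
  rw [Set.mem_Icc, ← abs_le, Int.le_floor, Int.cast_abs]
  exact hA i j

lemma abs_coeff_le_of_norm_le {p q m M R : ℝ} {v : ℂ} (hm : 0 < m) (hM : 1 ≤ M)
    (hv : m ≤ |v.im|) (hv' : ‖v‖ ≤ M) (h : ‖p * v + q‖ ≤ R) :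
    |p| ≤ M * R / m ∧ |q| ≤ M * R / m := by
  have hR : 0 ≤ R := (norm_nonneg _).trans h
  rw [le_div_iff₀ hm, le_div_iff₀ hm]
  constructor
  · calc |p| * m ≤ |p| * |v.im| := by gcongr
      _ = |(p * v + q).im| := by simp [abs_mul]
      _ ≤ ‖p * v + q‖ := Complex.abs_im_le_norm _
      _ ≤ M * R := h.trans (le_mul_of_one_le_left hR hM)
  · calc |q| * m ≤ |q| * |v.im| := by gcongr
      _ = |((p * v + q) * conj v).im| := by
        rw [← abs_mul, ← abs_neg]
        congr 1
        simp only [Complex.mul_im, Complex.mul_re, Complex.add_re, Complex.add_im,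
          Complex.ofReal_re, Complex.ofReal_im, Complex.conj_re, Complex.conj_im]
        ring
      _ ≤ ‖v‖ * ‖p * v + q‖ := by
        rw [mul_comm ‖v‖, ← Complex.norm_conj v, ← norm_mul]
        exact Complex.abs_im_le_norm _
      _ ≤ M * R := by gcongr

lemma im_mul_norm_denom_sq {a b c d : ℝ} (hdet : a * d - b * c = 1) {v w : ℂ}
    (h : w * (c * v + d) = a * v + b) : w.im * ‖c * v + d‖ ^ 2 = v.im := by
  have hmul : w.im * ‖c * v + d‖ ^ 2 = ((a * v + b) * conj (c * v + d)).im := by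
    rw [← h, mul_assoc, Complex.mul_conj, Complex.im_mul_ofReal, Complex.normSq_eq_norm_sq]
  rw [hmul]
  simp only [map_add, map_mul, Complex.conj_ofReal, Complex.mul_im, Complex.mul_re, Complex.add_re,
    Complex.add_im, Complex.ofReal_re, Complex.ofReal_im, Complex.conj_re, Complex.conj_im]
  linear_combination v.im * hdet

lemma abs_entry_le_of_mobius_eq {A : Matrix.SpecialLinearGroup (Fin 2) ℤ} {v w : ℂ} {m M : ℝ}
    (hm : 0 < m) (hM : 1 ≤ M) (hv : m ≤ |v.im|) (hv' : ‖v‖ ≤ M) (hw : m ≤ |w.im|) (hw' : ‖w‖ ≤ M)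
    (h : w * (A.1 1 0 * v + A.1 1 1) = A.1 0 0 * v + A.1 0 1) (i j : Fin 2) :
    |(A.1 i j : ℝ)| ≤ M * (M * √(M / m)) / m := by
  have hdet : (A.1 0 0 : ℝ) * A.1 1 1 - A.1 0 1 * A.1 1 0 = 1 := by
    have := A.2
    rw [Matrix.det_fin_two] at this
    exact_mod_cast this
  have him := im_mul_norm_denom_sq hdet (by push_cast; exact h)
  have hden : ‖((A.1 1 0 : ℝ) : ℂ) * v + (A.1 1 1 : ℝ)‖ ≤ √(M / m) := by
    refine Real.le_sqrt_of_sq_le ((le_div_iff₀' hm).2 ?_)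
    calc m * ‖((A.1 1 0 : ℝ) : ℂ) * v + (A.1 1 1 : ℝ)‖ ^ 2
        ≤ |w.im| * ‖((A.1 1 0 : ℝ) : ℂ) * v + (A.1 1 1 : ℝ)‖ ^ 2 := by gcongr
      _ = |v.im| := by rw [← him, abs_mul, abs_sq]
      _ ≤ M := (Complex.abs_im_le_norm v).trans hv'
  have hnum : ‖((A.1 0 0 : ℝ) : ℂ) * v + (A.1 0 1 : ℝ)‖ ≤ M * √(M / m) := by
    rw [Complex.ofReal_intCast, Complex.ofReal_intCast, ← h, norm_mul]
    gcongr
    simpa using hden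
  have hden' := hden.trans (le_mul_of_one_le_left (Real.sqrt_nonneg _) hM)
  fin_cases i <;> fin_cases j
  · exact (abs_coeff_le_of_norm_le hm hM hv hv' hnum).1
  · exact (abs_coeff_le_of_norm_le hm hM hv hv' hnum).2
  · exact (abs_coeff_le_of_norm_le hm hM hv hv' hden').1
  · exact (abs_coeff_le_of_norm_le hm hM hv hv' hden').2

lemma coe_mem_omegaSet_modularSubgroup {w : ℂ} (hw : w.im ≠ 0) :
    (w : RSphere) ∈ omegaSet modularSubgroup := by
  set m : ℝ := |w.im| / 2 with hm
  set M : ℝ := ‖w‖ + m + 1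
  have hm₀ : 0 < m := half_pos (abs_pos.2 hw)
  have hball {v : ℂ} (hv : v ∈ Metric.ball w m) : m ≤ |v.im| ∧ ‖v‖ ≤ M := by
    rw [mem_ball_iff_norm'] at hv
    have him := (abs_sub_abs_le_abs_sub w.im v.im).trans (Complex.abs_im_le_norm (w - v))
    have hnorm := (norm_sub_norm_le v w).trans_eq (norm_sub_rev v w)
    constructor <;> linarith
  refine ⟨(↑) '' Metric.ball w m, OnePoint.isOpen_image_coe.2 Metric.isOpen_ball,
    ⟨w, Metric.mem_ball_self hm₀, rfl⟩, ?_⟩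
  refine ((finite_setOf_forall_abs_le (M * (M * √(M / m)) / m)).image
    ((QuotientGroup.mk' (Subgroup.center SL2C)).comp
      (Matrix.SpecialLinearGroup.map (Int.castRingHom ℂ)))).subset ?_
  rintro _ ⟨⟨A, rfl⟩, _, ⟨_, ⟨v, hv, rfl⟩, hvv'⟩, v', hv', rfl⟩
  have hmob : v' * (A.1 1 0 * v + A.1 1 1) = A.1 0 0 * v + A.1 0 1 := by
    simpa using (psl_mk_coe_eq_coe_iff (Matrix.SpecialLinearGroup.map (Int.castRingHom ℂ) A)).1 hvv'
  exact ⟨A, abs_entry_le_of_mobius_eq hm₀ (by linarith [norm_nonneg w]) (hball hv).1 (hball hv).2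
    (hball hv').1 (hball hv').2 hmob, rfl⟩

lemma limitSet_modularSubgroup_subset : limitSet modularSubgroup ⊆ realCircleS := by
  intro z hz
  induction z using OnePoint.rec with
  | infty => exact .inl rfl
  | coe w =>
    have him : w.im = 0 := by
      by_contra him
      exact hz (coe_mem_omegaSet_modularSubgroup him)
    exact .inr ⟨w.re, congrArg _ (Complex.ext rfl him)⟩

end Modular

section Sanov

/-- The subgroup of `PSL(2,ℂ)` generated by the classes of `(1, 2; 0, 1)` and `(1, 0; -2, 1)`,
that is, the image of the principal congruence subgroup `Γ(2)`. -/
def sanovSubgroup : Subgroup PSL2C :=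
  Subgroup.closure {upperUnipotent 2, lowerUnipotent (-2)}

lemma upperUnipotent_mem_sanovSubgroup : upperUnipotent 2 ∈ sanovSubgroup :=
  Subgroup.subset_closure (.inl rfl)

lemma lowerUnipotent_mem_sanovSubgroup : lowerUnipotent (-2) ∈ sanovSubgroup :=
  Subgroup.subset_closure (.inr rfl)

lemma upperUnipotent_intCast_mem_modularSubgroup (n : ℤ) :
    upperUnipotent n ∈ modularSubgroup := by
  refine ⟨⟨!![1, n; 0, 1], by simp⟩, congrArg QuotientGroup.mk (Subtype.ext ?_)⟩
  refine (Matrix.SpecialLinearGroup.map_apply_coe _ _).trans ?_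
  ext i j
  fin_cases i <;> fin_cases j <;> simp

lemma lowerUnipotent_intCast_mem_modularSubgroup (n : ℤ) :
    lowerUnipotent n ∈ modularSubgroup := by
  refine ⟨⟨!![1, 0; n, 1], by simp⟩, congrArg QuotientGroup.mk (Subtype.ext ?_)⟩
  refine (Matrix.SpecialLinearGroup.map_apply_coe _ _).trans ?_
  ext i j
  fin_cases i <;> fin_cases j <;> simp

lemma sanovSubgroup_le_modularSubgroup : sanovSubgroup ≤ modularSubgroup := by
  rw [sanovSubgroup, Subgroup.closure_le]
  rintro _ (rfl | rfl)
  · exact_mod_cast upperUnipotent_intCast_mem_modularSubgroup 2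
  · exact_mod_cast lowerUnipotent_intCast_mem_modularSubgroup (-2)

lemma ofHomog_add_two_mul_mem_limitSet_sanovSubgroup_iff {p q : ℂ} (h : p ≠ 0 ∨ q ≠ 0) :
    ofHomog (p + 2 * q) q ∈ limitSet sanovSubgroup ↔ ofHomog p q ∈ limitSet sanovSubgroup := by
  rw [← psl_upperUnipotent 2 h, psl_mem_limitSet_iff upperUnipotent_mem_sanovSubgroup]

lemma ofHomog_sub_two_mul_mem_limitSet_sanovSubgroup_iff {p q : ℂ} (h : p ≠ 0 ∨ q ≠ 0) :
    ofHomog p (q - 2 * p) ∈ limitSet sanovSubgroup ↔ ofHomog p q ∈ limitSet sanovSubgroup := by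
  rw [← psl_mem_limitSet_iff lowerUnipotent_mem_sanovSubgroup (z := ofHomog p q),
    psl_lowerUnipotent _ h, neg_mul, neg_add_eq_sub]

lemma even_euclid_induction {P : ℤ → ℤ → Prop} (h_left : ∀ q ≠ 0, P 0 q) (h_right : ∀ p ≠ 0, P p 0)
    (h_add : ∀ p q, q ≠ 0 → (P (p + 2 * q) q ↔ P p q))
    (h_sub : ∀ p q, p ≠ 0 → (P p (q - 2 * p) ↔ P p q))
    {p q : ℤ} (hpq : Odd (p + q)) : P p q := by
  induction hn : p.natAbs + q.natAbs using Nat.strong_induction_on generalizing p q with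
  | _ n ih =>
    subst hn
    rcases eq_or_ne p 0 with rfl | hp
    · exact h_left q (by rintro rfl; simp at hpq)
    rcases eq_or_ne q 0 with rfl | hq
    · exact h_right p hp
    have hadd : Odd (p + 2 * q + q) := by grind
    have hadd' : Odd (p - 2 * q + q) := by grind
    have hsub : Odd (p + (q - 2 * p)) := by grind
    have hsub' : Odd (p + (q + 2 * p)) := by grind
    obtain hdesc | hdesc | hdesc | hdesc :
        (p + 2 * q).natAbs < p.natAbs ∨ (p - 2 * q).natAbs < p.natAbs ∨
          (q - 2 * p).natAbs < q.natAbs ∨ (q + 2 * p).natAbs < q.natAbs := by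
      have : p.natAbs ≠ q.natAbs := by grind
      omega
    · exact (h_add p q hq).1 (ih _ (by lia) hadd rfl)
    · simpa using (h_add (p - 2 * q) q hq).2 (ih _ (by lia) hadd' rfl)
    · exact (h_sub p q hp).1 (ih _ (by lia) hsub rfl)
    · simpa using (h_sub p (q + 2 * p) hp).2 (ih _ (by lia) hsub' rfl)

lemma ofHomog_intCast_mem_limitSet_sanovSubgroup {p q : ℤ} (hpq : Odd (p + q)) :
    ofHomog p q ∈ limitSet sanovSubgroup := by
  refine even_euclid_induction (P := fun p q : ℤ ↦ ofHomog p q ∈ limitSet sanovSubgroup)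
    (fun q hq ↦ ?_) (fun p _ ↦ ?_) (fun p q hq ↦ ?_) (fun p q hp ↦ ?_) hpq
  · rw [Int.cast_zero, ofHomog_of_ne_zero _ (Int.cast_ne_zero.2 hq), zero_div]
    exact (isParabolic_lowerUnipotent (by simp)).mem_limitSet lowerUnipotent_mem_sanovSubgroup
      (psl_lowerUnipotent_zero _)
  · rw [Int.cast_zero, ofHomog_zero_right]
    exact (isParabolic_upperUnipotent two_ne_zero).mem_limitSet upperUnipotent_mem_sanovSubgroup
      (psl_upperUnipotent_infty _)
  · have hq' : (q : ℂ) ≠ 0 := Int.cast_ne_zero.2 hq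
    simpa using ofHomog_add_two_mul_mem_limitSet_sanovSubgroup_iff (p := p) (.inr hq')
  · have hp' : (p : ℂ) ≠ 0 := Int.cast_ne_zero.2 hp
    simpa using ofHomog_sub_two_mul_mem_limitSet_sanovSubgroup_iff (q := q) (.inl hp')

lemma exists_odd_add_abs_div_sub_lt (x : ℝ) {ε : ℝ} (hε : 0 < ε) :
    ∃ p q : ℤ, q ≠ 0 ∧ Odd (p + q) ∧ |(p / q : ℝ) - x| < ε := by
  obtain ⟨n, hn⟩ := exists_nat_one_div_lt hε
  have hn₀ : (0 : ℝ) < 2 * (n + 1) := by positivity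
  have hnum : |2 * (⌊(n + 1) * x⌋ : ℝ) + 1 - 2 * (n + 1) * x| ≤ 2 := by
    have hlo := Int.floor_le ((n + 1) * x)
    have hhi := Int.lt_floor_add_one ((n + 1) * x)
    rw [abs_le]
    constructor <;> linarith
  refine ⟨2 * ⌊(n + 1) * x⌋ + 1, 2 * (n + 1), by lia, by grind, ?_⟩
  push_cast
  calc |(2 * (⌊(n + 1) * x⌋ : ℝ) + 1) / (2 * (n + 1)) - x|
      = |2 * (⌊(n + 1) * x⌋ : ℝ) + 1 - 2 * (n + 1) * x| / (2 * (n + 1)) := by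
        rw [div_sub' hn₀.ne', abs_div, abs_of_pos hn₀]
    _ ≤ 2 / (2 * (n + 1)) := by gcongr
    _ = 1 / (n + 1) := by field_simp
    _ < ε := hn

lemma realCircleS_subset_limitSet_sanovSubgroup : realCircleS ⊆ limitSet sanovSubgroup := by
  rintro _ (rfl | ⟨x, rfl⟩)
  · simpa [ofHomog_zero_right] using ofHomog_intCast_mem_limitSet_sanovSubgroup (p := 1) (q := 0)
      (by decide)
  have hclosed : IsClosed {x : ℝ | ((x : ℂ) : RSphere) ∈ limitSet sanovSubgroup} :=
    (isClosed_limitSet sanovSubgroup).preimage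
      (OnePoint.continuous_coe.comp Complex.continuous_ofReal)
  refine hclosed.closure_subset (Metric.mem_closure_iff.2 fun ε hε ↦ ?_)
  obtain ⟨p, q, hq, hodd, hdist⟩ := exists_odd_add_abs_div_sub_lt x hε
  refine ⟨p / q, ?_, by rwa [dist_comm, Real.dist_eq]⟩
  have hmem := ofHomog_intCast_mem_limitSet_sanovSubgroup hodd
  rw [ofHomog_of_ne_zero _ (Int.cast_ne_zero.2 hq)] at hmem
  simpa using hmem

theorem limitSet_sanovSubgroup : limitSet sanovSubgroup = realCircleS :=
  ((limitSet_mono sanovSubgroup_le_modularSubgroup).trans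
    limitSet_modularSubgroup_subset).antisymm realCircleS_subset_limitSet_sanovSubgroup

end Sanov

section RoundCircle

open scoped ComplexConjugate

lemma IsRoundCircle.psl_image {S : Set RSphere} (hS : IsRoundCircle S) (k : PSL2C) :
    IsRoundCircle (psl k '' S) := by
  obtain ⟨g, rfl⟩ := hS
  refine ⟨k * g, ?_⟩
  rw [Set.image_image]
  simp only [psl_mul]

lemma ofHomog_mem_unitCircleS_iff {p q : ℂ} (h : p ≠ 0 ∨ q ≠ 0) :
    ofHomog p q ∈ unitCircleS ↔ ‖p‖ = ‖q‖ := by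
  by_cases hq : q = 0
  · subst hq
    simp_all [ofHomog_zero_right, unitCircleS]
  · simp [ofHomog_of_ne_zero p hq, unitCircleS, div_eq_one_iff_eq, hq]

lemma ofHomog_mem_realCircleS_iff {p q : ℂ} :
    ofHomog p q ∈ realCircleS ↔ (p * conj q).im = 0 := by
  by_cases hq : q = 0
  · simp [hq, ofHomog_zero_right, realCircleS]
  have hmem : ofHomog p q ∈ realCircleS ↔ (p / q).im = 0 := by
    rw [← Complex.conj_eq_iff_im, Complex.conj_eq_iff_real]
    simp [ofHomog_of_ne_zero p hq, realCircleS]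
  rw [hmem, div_eq_mul_inv, Complex.inv_def, ← mul_assoc, Complex.im_mul_ofReal]
  simp [hq]

theorem isRoundCircle_realCircleS : IsRoundCircle realCircleS := by
  -- The Cayley transform `z ↦ i (1 + z) / (1 - z)`.
  obtain ⟨g, hg⟩ := exists_psl_ofHomog_eq (a := Complex.I) (b := Complex.I) (c := -1) (d := 1)
    (by simp)
  have hmem (z : RSphere) : psl g z ∈ realCircleS ↔ z ∈ unitCircleS := by
    obtain ⟨p, q, h, rfl⟩ := exists_eq_ofHomog z
    have him : ((Complex.I * p + Complex.I * q) * conj (-1 * p + 1 * q)).im =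
        ‖q‖ ^ 2 - ‖p‖ ^ 2 := by
      rw [← Complex.normSq_eq_norm_sq, ← Complex.normSq_eq_norm_sq]
      simp only [Complex.normSq_apply, Complex.mul_im, Complex.mul_re, Complex.add_re,
        Complex.add_im, Complex.conj_re, Complex.conj_im, Complex.I_re, Complex.I_im,
        Complex.neg_re, Complex.neg_im, Complex.one_re, Complex.one_im]
      ring
    rw [hg p q h, ofHomog_mem_realCircleS_iff, ofHomog_mem_unitCircleS_iff h, him, sub_eq_zero,
      sq_eq_sq₀ (norm_nonneg q) (norm_nonneg p), eq_comm]
  refine ⟨g, Set.ext fun z ↦ ?_⟩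
  rw [psl_image_eq_preimage, Set.mem_preimage, ← hmem, psl_psl_inv]

end RoundCircle

lemma conj_smul_closure_pair {G : Type*} [Group G] (g h₁ h₂ : G) :
    MulAut.conj g • Subgroup.closure {h₁, h₂} =
      Subgroup.closure {g * h₁ * g⁻¹, g * h₂ * g⁻¹} := by
  rw [Subgroup.smul_closure, ← Set.image_smul, Set.image_pair]
  rfl

lemma closure_triple_eq_closure_pair {G : Type*} [Group G] {h₁ h₂ h₃ : G} (h : h₁ * h₂ * h₃ = 1) :
    Subgroup.closure {h₁, h₂, h₃} = Subgroup.closure {h₁, h₂} := by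
  refine le_antisymm ((Subgroup.closure_le _).2 ?_) (Subgroup.closure_mono (by grind))
  have hmem₁ : h₁ ∈ Subgroup.closure {h₁, h₂} := Subgroup.subset_closure (by simp)
  have hmem₂ : h₂ ∈ Subgroup.closure {h₁, h₂} := Subgroup.subset_closure (by simp)
  rintro _ (rfl | rfl | rfl)
  · exact hmem₁
  · exact hmem₂
  · rw [← inv_eq_of_mul_eq_one_right h]
    exact inv_mem (mul_mem hmem₁ hmem₂)

theorem exists_conj_smul_closure_eq_sanovSubgroup {h₁ h₂ h₃ : PSL2C} (hp1 : IsParabolic h₁)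
    (hp2 : IsParabolic h₂) (hp3 : IsParabolic h₃) {p₁ p₂ : RSphere} (hf1 : psl h₁ p₁ = p₁)
    (hf2 : psl h₂ p₂ = p₂) (h12 : p₁ ≠ p₂) (hrel : h₁ * h₂ * h₃ = 1) :
    ∃ g : PSL2C, MulAut.conj g • Subgroup.closure {h₁, h₂, h₃} = sanovSubgroup := by
  have hprod : IsParabolic (h₁ * h₂) := by
    rw [eq_inv_of_mul_eq_one_left hrel]
    exact hp3.inv
  obtain ⟨g, hg₁, hg₂⟩ := exists_conj_eq_unipotent hp1 hp2 hprod hf1 hf2 h12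
  refine ⟨g, ?_⟩
  rw [closure_triple_eq_closure_pair hrel, conj_smul_closure_pair, hg₁, hg₂, sanovSubgroup]

theorem three_parabolics_generate_fuchsian_general {h₁ h₂ h₃ : PSL2C} (hp1 : IsParabolic h₁)
    (hp2 : IsParabolic h₂) (hp3 : IsParabolic h₃) {p₁ p₂ : RSphere} (hf1 : psl h₁ p₁ = p₁)
    (hf2 : psl h₂ p₂ = p₂) (h12 : p₁ ≠ p₂) (hrel : h₁ * h₂ * h₃ = 1) :
    IsFuchsian (Subgroup.closure {h₁, h₂, h₃}) ∧
      IsRoundCircle (limitSet (Subgroup.closure {h₁, h₂, h₃})) := by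
  obtain ⟨g, hg⟩ := exists_conj_smul_closure_eq_sanovSubgroup hp1 hp2 hp3 hf1 hf2 h12 hrel
  constructor
  · refine ⟨g, fun f hf ↦ isRealElt_of_mem_modularSubgroup (sanovSubgroup_le_modularSubgroup ?_)⟩
    rw [← hg]
    exact Subgroup.smul_mem_pointwise_smul f (MulAut.conj g) _ hf
  · rw [← inv_smul_eq_iff.2 hg.symm, ← map_inv, limitSet_conj, limitSet_sanovSubgroup]
    exact isRoundCircle_realCircleS.psl_image g⁻¹

/-- Three parabolic elements with pairwise distinct fixed points and product the
identity generate (when discrete) a Fuchsian group whose limit set is a round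
circle. -/
theorem three_parabolics_generate_fuchsian
    (h₁ h₂ h₃ : PSL2C)
    (hp1 : IsParabolic h₁) (hp2 : IsParabolic h₂) (hp3 : IsParabolic h₃)
    (p₁ p₂ p₃ : RSphere)
    (hf1 : psl h₁ p₁ = p₁) (hf2 : psl h₂ p₂ = p₂) (hf3 : psl h₃ p₃ = p₃)
    (h12 : p₁ ≠ p₂) (h13 : p₁ ≠ p₃) (h23 : p₂ ≠ p₃)
    (hrel : h₁ * h₂ * h₃ = 1)
    (hdisc : DiscreteTopology ↥(Subgroup.closure {h₁, h₂, h₃} : Subgroup PSL2C)) :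
    IsFuchsian (Subgroup.closure {h₁, h₂, h₃}) ∧
    IsRoundCircle (limitSet (Subgroup.closure {h₁, h₂, h₃})) :=
  three_parabolics_generate_fuchsian_general hp1 hp2 hp3 hf1 hf2 h12 hrel

end
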